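/- arXiv:cond-mat/0005327 — 5 statements merged into one kernel-verified Lean document; each statement's English description precedes it below -/
import Mathlib

section
/- Let R > 0, let N ≥ 1, and for each i ∈ {1,…,N} let n_i > 0 and c_i > 0 be constants. Let T : ℝ → ℝ and V_1,…,V_N : ℝ → ℝ be differentiable functions with T(t) > 0 and V_i(t) > 0 for all t and all i, satisfying ∑_{i=1}^{N} n_i (c_i·T′(t) + R·T(t)·V_i′(t)/V_i(t)) = 0 for every t. Then the total entropy t ↦ ∑_{i=1}^{N} n_i (c_i·log T(t) + R·log V_i(t)) is constant in t. (Planck's Lemma 2: in every adiabatic umkehrbar process performed on a system of N ideal gases connected by diathermal walls and remaining in thermal equilibrium, the total entropy remains constant.) -/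
/-!
The entropy is differentiable because every `T t` and `V i t` is positive, and its derivative is
`∑ i, n i * (c i * T' / T + R * V i' / V i)`, i.e. the total heat rate divided by the common
temperature `T`. The adiabatic condition makes this vanish, so the entropy is constant on `ℝ`.
-/

/-- Planck's Lemma 2: in every adiabatic umkehrbar process performed on a system of `N`
ideal gases connected by diathermal walls (hence sharing a common temperature `T`),
the total entropy remains constant. -/
theorem planck_lemma2_total_entropy_constant
    (R : ℝ) (hR : 0 < R) (N : ℕ) (hN : 1 ≤ N)
    (n c : Fin N → ℝ) (hn : ∀ i, 0 < n i) (hc : ∀ i, 0 < c i)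
    (T : ℝ → ℝ) (V : Fin N → ℝ → ℝ)
    (hT : Differentiable ℝ T) (hV : ∀ i, Differentiable ℝ (V i))
    (hTpos : ∀ t, 0 < T t) (hVpos : ∀ i t, 0 < V i t)
    (hadiab : ∀ t, ∑ i, n i * (c i * deriv T t + R * T t * deriv (V i) t / V i t) = 0) :
    ∀ t₁ t₂ : ℝ,
      ∑ i, n i * (c i * Real.log (T t₁) + R * Real.log (V i t₁))
        = ∑ i, n i * (c i * Real.log (T t₂) + R * Real.log (V i t₂)) := by
  have hderiv : ∀ t, HasDerivAt
      (fun s => ∑ i, n i * (c i * Real.log (T s) + R * Real.log (V i s))) 0 t := by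
    intro t
    have hsum : HasDerivAt
        (fun s => ∑ i, n i * (c i * Real.log (T s) + R * Real.log (V i s)))
        (∑ i, n i * (c i * (deriv T t / T t) + R * (deriv (V i) t / V i t))) t :=
      HasDerivAt.fun_sum fun i _ =>
        ((((hT t).hasDerivAt.log (hTpos t).ne').const_mul (c i)).add
          (((hV i t).hasDerivAt.log (hVpos i t).ne').const_mul R)).const_mul (n i)
    have hzero : ∑ i, n i * (c i * (deriv T t / T t) + R * (deriv (V i) t / V i t)) = 0 := by
      rw [← zero_div (T t), ← hadiab t, Finset.sum_div]
      refine Finset.sum_congr rfl fun i _ => ?_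
      have hTt := (hTpos t).ne'
      have hVt := (hVpos i t).ne'
      field_simp
    rwa [hzero] at hsum
  exact is_const_of_deriv_eq_zero (fun t => (hderiv t).differentiableAt)
    fun t => (hderiv t).deriv
end

section
/- Let p > 0 and let ε satisfy 0 < ε < p. On the circle Γ = AddCircle p (the quotient ℝ/pℤ with its quotient topology, π : ℝ → AddCircle p the canonical projection) define adiabatic accessibility by: s ≺ t iff s − t ∈ π([0, ε)). Then Carathéodory's principle holds for (Γ, ≺): for every s ∈ Γ and every neighborhood U of s there exist a point t ∈ U and an open set W with t ∈ W ⊆ U such that ¬(s ≺ r) for every r ∈ W. -/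
/-!
Points just ahead of `s` are inaccessible: if `s = π x` and `r = π y` with `0 < y - x < p - ε`,
then a lift of `s - r` lying in `[0, ε)` would differ from `x - y` by a real number
strictly between `0` and `p`, which is not a multiple of `p`. Since `π` is an open map, the image
of a short interval `(x, x + η)` is an open set arbitrarily close to `s` and serves as `W`.
-/

/-- Carathéodory's principle holds on the circle with the accessibility relation
`s ≺ t ↔ s − t ∈ π([0, ε))` (the Bernstein-type counterexample of the paper). -/
theorem caratheodory_principle_on_circle
    (p ε : ℝ) (hp : 0 < p) (hε : 0 < ε) (hεp : ε < p) :
    ∀ s : AddCircle p, ∀ U ∈ nhds s,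
      ∃ t ∈ U, ∃ W : Set (AddCircle p), IsOpen W ∧ t ∈ W ∧ W ⊆ U ∧
        ∀ r ∈ W, ¬ (s - r ∈ ((↑) : ℝ → AddCircle p) '' Set.Ico 0 ε) := by
  intro s U hU
  obtain ⟨x, rfl⟩ := QuotientAddGroup.mk_surjective s
  have hV : ((↑) : ℝ → AddCircle p) ⁻¹' U ∈ nhds x :=
    (AddCircle.continuous_mk' p).continuousAt hU
  obtain ⟨δ, hδ, hball⟩ := Metric.mem_nhds_iff.1 hV
  obtain ⟨η, hη, hηδ, hηp⟩ : ∃ η : ℝ, 0 < η ∧ η ≤ δ ∧ η ≤ p - ε :=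
    ⟨min δ (p - ε), lt_min hδ (sub_pos.2 hεp), min_le_left _ _, min_le_right _ _⟩
  have hsub : ((↑) : ℝ → AddCircle p) '' Set.Ioo x (x + η) ⊆ U := by
    rintro _ ⟨y, hy, rfl⟩
    refine hball ?_
    rw [Metric.mem_ball, Real.dist_eq, abs_lt]
    constructor <;> linarith [hy.1, hy.2]
  have ht : ((x + η / 2 : ℝ) : AddCircle p) ∈ ((↑) : ℝ → AddCircle p) '' Set.Ioo x (x + η) :=
    ⟨x + η / 2, ⟨by linarith, by linarith⟩, rfl⟩
  refine ⟨_, hsub ht, _, QuotientAddGroup.isOpenMap_coe _ isOpen_Ioo, ht, hsub, ?_⟩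
  rintro _ ⟨y, hy, rfl⟩ ⟨z, hz, hzy⟩
  have h0 : ((z - (x - y) : ℝ) : AddCircle p) = 0 := by
    rw [AddCircle.coe_sub, AddCircle.coe_sub, sub_eq_zero]
    exact hzy
  obtain ⟨n, hn⟩ := (AddCircle.coe_eq_zero_iff p).1 h0
  rw [zsmul_eq_mul] at hn
  -- `0 < n * p < p` squeezes the integer `n` strictly between `0` and `1`.
  have h1 : (0 : ℝ) < n := pos_of_mul_pos_left (by linarith [hy.1, hz.1]) hp.le
  have h2 : (n : ℝ) < 1 := by
    refine lt_of_mul_lt_mul_right ?_ hp.le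
    linarith [hy.2, hz.2]
  have h3 : 0 < n := by exact_mod_cast h1
  have h4 : n < 1 := by exact_mod_cast h2
  omega
end

section
/- Let p > 0 and ε > 0, and let π : ℝ → AddCircle p be the canonical projection. Suppose f : AddCircle p → ℝ satisfies f(s) ≤ f(t) whenever s − t ∈ π([0, ε)). Then f is constant: f(s) = f(t) for all s, t ∈ AddCircle p. (Consequently there is no non-constant global entropy function — continuous or otherwise — that is monotone with respect to the accessibility relation of the circle counterexample, even though that relation satisfies Carathéodory's principle.) -/
/-! Every `a` in the circle is the projection of some `x ≥ 0`, hence a multiple `n • π(x / n)` of an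
element of the window `π([0, ε))` once `n` is large. Chaining `n` accessibility steps shows that any
point is accessible from any other, so `f s ≤ f t` holds in both directions. -/

/-- Any function on the circle that is monotone with respect to the accessibility
relation `s − t ∈ π([0, ε))` is constant: there is no non-constant global entropy
function for the circle counterexample. -/
theorem circle_no_nonconstant_entropy
    (p ε : ℝ) (hp : 0 < p) (hε : 0 < ε)
    (f : AddCircle p → ℝ)
    (hf : ∀ s t : AddCircle p,
      s - t ∈ ((↑) : ℝ → AddCircle p) '' Set.Ico 0 ε → f s ≤ f t) :
    ∀ s t : AddCircle p, f s = f t := by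
  have : Fact (0 < p) := ⟨hp⟩
  have chain : ∀ (y : ℝ), y ∈ Set.Ico 0 ε → ∀ (n : ℕ) (t : AddCircle p),
      f (t + n • (y : AddCircle p)) ≤ f t := by
    intro y hy n t
    induction n with
    | zero => simp
    | succ k ih =>
      refine (hf _ _ ⟨y, hy, ?_⟩).trans ih
      rw [succ_nsmul]
      abel
  have key : ∀ s t : AddCircle p, f s ≤ f t := by
    intro s t
    obtain ⟨x, hx, hxs⟩ : s - t ∈ ((↑) : ℝ → AddCircle p) '' Set.Ico 0 (0 + p) := by
      rw [AddCircle.coe_image_Ico_eq]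
      trivial
    obtain ⟨n, hn⟩ := exists_nat_gt (x / ε)
    have hn0 : (0 : ℝ) < n := (div_nonneg hx.1 hε.le).trans_lt hn
    have h := chain (x / n) ⟨div_nonneg hx.1 hn0.le, by
      rw [div_lt_iff₀ hn0, mul_comm]
      exact (div_lt_iff₀ hε).1 hn⟩ n t
    rwa [← AddCircle.coe_nsmul, nsmul_eq_mul, mul_div_cancel₀ _ hn0.ne', hxs,
      add_sub_cancel] at h
  exact fun s t => le_antisymm (key s t) (key t s)
end

section
/- Define on ℝ the relation x ≺ y iff y − x is rational (y − x lies in the range of the coercion ℚ → ℝ). Then: (i) Born's version of Carathéodory's principle is satisfied, i.e. for every x ∈ ℝ and every neighborhood U of x there exists y ∈ U with ¬(x ≺ y); but (ii) Carathéodory's original principle fails, because for every x ∈ ℝ, every point t ∈ ℝ and every neighborhood V of t there exists r ∈ V with x ≺ r (so no point has a neighborhood consisting entirely of states inaccessible from x). -/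
/-- The rational-difference relation `x ≺ y ↔ y − x ∈ ℚ` on `ℝ` satisfies Born's version
of Carathéodory's principle but not Carathéodory's original principle. -/
theorem born_principle_holds_caratheodory_fails_for_rational_relation :
    (∀ x : ℝ, ∀ U ∈ nhds x, ∃ y ∈ U, ¬ (y - x ∈ Set.range ((↑) : ℚ → ℝ))) ∧
    (∀ x t : ℝ, ∀ V ∈ nhds t, ∃ r ∈ V, r - x ∈ Set.range ((↑) : ℚ → ℝ)) := by
  -- Translation by `-x` is a homeomorphism, so the preimages under it of the irrationals and
  -- of the rationals are dense, and each of them meets every neighbourhood.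
  have open_sub (x : ℝ) : IsOpenMap (fun y : ℝ => y - x) :=
    (Homeomorph.subRight x).isOpenMap
  constructor
  · intro x U hU
    obtain ⟨y, hy, hyU⟩ := (dense_irrational.preimage (open_sub x)).inter_nhds_nonempty hU
    exact ⟨y, hyU, hy⟩
  · intro x t V hV
    obtain ⟨r, hr, hrV⟩ :=
      (Dense.preimage Rat.denseRange_cast (open_sub x)).inter_nhds_nonempty hV
    exact ⟨r, hrV, hr⟩
end

section
/- Let a, b : ℝ × ℝ → ℝ be continuously differentiable functions and let z₀ ∈ ℝ × ℝ be a point with (a(z₀), b(z₀)) ≠ (0, 0). Then there exist an open set U containing z₀ and functions S, T : ℝ × ℝ → ℝ such that S is differentiable at every point of U, T(z) ≠ 0 for every z ∈ U, and for every z ∈ U: a(z) = T(z) · (∂S/∂x)(z) and b(z) = T(z) · (∂S/∂y)(z). (Born's claim that every differential form a dx + b dy on a two-dimensional state space possesses an integrating divisor, made precise locally and away from zeros of the form: d̸Q = T dS.) -/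
/-!
The kernel of a nonvanishing `C¹` form `a dx + b dy` is a line field, and `S` is a first integral
of it: `dS` then has the same kernel as the form, so the two are proportional by a nonvanishing
factor `T`.

After exchanging the coordinates if necessary, `b z₀ ≠ 0` and the line field is given by the scalar
equation `y' = f (x, y)` with `f = -a / b`, cut off to a compactly supported `C¹` function so that
the solution `t ↦ α c t` with `α c t₀ = c` exists on a fixed time interval
(`exists_continuous_flow`). The first integral sends a point to the value at `t₀` of the solution
through it, that is, `S (t, α c t) = c`; it is a component of the inverse of `(c, t) ↦ (t, α c t)`
(`exists_first_integral`).

The inverse function theorem requires `α` to be `C¹` in the initial value `c`. In one dimension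
this follows by a direct computation (`exists_deriv_initial_value`): the difference `D` of two
solutions satisfies the linear equation `D' = G D`, where `G` is the mean value of `∂f/∂y` between
them, so `D = (c' - c) exp (∫ G)`. This expresses the difference quotient of `α` in `c` as
a continuous positive function, also when `c' = c`.
-/
open scoped Topology
open Set Metric

/-- The solutions of `y' = f (t, y)` with initial values `c` near `y₀` at time `t₀`. The function `α` is
continuous on the whole plane, but is a solution only on the box `|c - y₀| < 1`, `|t - t₀| < 1`. -/
theorem exists_continuous_flow {f : ℝ × ℝ → ℝ} (hf : ContDiff ℝ 1 f) (hc : HasCompactSupport f)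
    (t₀ y₀ : ℝ) :
    ∃ α : ℝ → ℝ → ℝ, Continuous ↿α ∧ ∀ c ∈ ball y₀ 1, α c t₀ = c ∧
      ∀ t ∈ Ioo (t₀ - 1) (t₀ + 1), HasDerivAt (α c) (f (t, α c t)) t := by
  obtain ⟨K, hK⟩ := hf.lipschitzWith_of_hasCompactSupport hc one_ne_zero
  obtain ⟨L, hL⟩ := hc.exists_bound_of_continuous hf.continuous
  have h₁ : t₀ - 1 ≤ t₀ + 1 := by linarith
  have h₂ : y₀ - 1 ≤ y₀ + 1 := by linarith
  -- `f` is bounded and globally Lipschitz, so the radius `L + 1` of the spatial domain is large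
  -- enough for solutions to live on the whole time interval.
  have hPL : IsPicardLindelof (fun t y => f (t, y)) (tmin := t₀ - 1) (tmax := t₀ + 1)
      ⟨t₀, by constructor <;> linarith⟩ y₀ (L.toNNReal + 1) 1 L.toNNReal K :=
    { lipschitzOnWith := fun t _ => by
        refine LipschitzWith.lipschitzOnWith (LipschitzWith.of_dist_le_mul fun x y => ?_)
        simpa [Prod.dist_eq] using hK.dist_le_mul (t, x) (t, y)
      continuousOn := fun x _ => (hf.continuous.comp (by fun_prop)).continuousOn
      norm_le := fun t _ x _ => (hL _).trans (Real.le_coe_toNNReal L)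
      mul_max_le := by simp }
  obtain ⟨α, hα, hαc⟩ := hPL.exists_forall_mem_closedBall_eq_hasDerivWithinAt_continuousOn
  have hp : ∀ c ∈ ball y₀ 1, (projIcc _ _ h₂ c : ℝ) = c := fun c hc => by
    rw [Real.ball_eq_Ioo] at hc
    rw [projIcc_of_mem h₂ (Ioo_subset_Icc_self hc)]
  have hq : ∀ t ∈ Ioo (t₀ - 1) (t₀ + 1), (projIcc _ _ h₁ t : ℝ) = t := fun t ht => by
    rw [projIcc_of_mem h₁ (Ioo_subset_Icc_self ht)]
  have ht₀ : t₀ ∈ Ioo (t₀ - 1) (t₀ + 1) := by constructor <;> linarith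
  -- composing with the projections onto the closed box makes `α` continuous everywhere
  refine ⟨fun c t => α (projIcc _ _ h₂ c, projIcc _ _ h₁ t), ?_, fun c hc => ⟨?_, fun t ht => ?_⟩⟩
  · refine hαc.comp_continuous (f := fun p : ℝ × ℝ =>
      ((projIcc _ _ h₂ p.1 : ℝ), (projIcc _ _ h₁ p.2 : ℝ))) ?_ fun p => ⟨?_, ?_⟩
    · exact (continuous_subtype_val.comp (continuous_projIcc.comp continuous_fst)).prodMk
        (continuous_subtype_val.comp (continuous_projIcc.comp continuous_snd))
    · simp only [NNReal.coe_one, Real.closedBall_eq_Icc]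
      exact (projIcc _ _ h₂ p.1).2
    · exact (projIcc _ _ h₁ p.2).2
  · simpa only [hp c hc, hq t₀ ht₀] using (hα c (ball_subset_closedBall hc)).1
  · have h := ((hα c (ball_subset_closedBall hc)).2 t (Ioo_subset_Icc_self ht)).hasDerivAt
      (Icc_mem_nhds ht.1 ht.2)
    simp only [hp c hc, hq t ht]
    refine h.congr_of_eventuallyEq ?_
    filter_upwards [isOpen_Ioo.mem_nhds ht] with s hs
    rw [hq s hs]

/-- The solution of a scalar `C¹` equation is differentiable in its initial value, with continuous
nonvanishing derivative `E c t = exp (∫ s in t₀..t, (∂f/∂y) (s, α c s))`. -/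
theorem exists_deriv_initial_value {f : ℝ × ℝ → ℝ} (hf : ContDiff ℝ 1 f) {t₀ y₀ : ℝ}
    {α : ℝ → ℝ → ℝ} (hαc : Continuous ↿α) (hα : ∀ c ∈ ball y₀ 1, α c t₀ = c ∧
      ∀ t ∈ Ioo (t₀ - 1) (t₀ + 1), HasDerivAt (α c) (f (t, α c t)) t) :
    ∃ E : ℝ → ℝ → ℝ, Continuous ↿E ∧ (∀ c t, E c t ≠ 0) ∧
      ∀ c ∈ ball y₀ 1, ∀ t ∈ Ioo (t₀ - 1) (t₀ + 1), HasDerivAt (α · t) (E c t) c := by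
  have hαc' : Continuous fun p : ℝ × ℝ => α p.1 p.2 := hαc
  set fy : ℝ × ℝ → ℝ := fun p => fderiv ℝ f p (0, 1) with hfy
  have hfyc : Continuous fy := (hf.continuous_fderiv one_ne_zero).clm_apply continuous_const
  -- the mean value of `∂f/∂y` between the solutions with initial values `p.1` and `p.2`
  set G : ℝ × ℝ → ℝ → ℝ := fun p s =>
    ∫ θ in (0 : ℝ)..1, fy (s, α p.1 s + θ * (α p.2 s - α p.1 s)) with hG
  have hGc : Continuous ↿G := by
    refine intervalIntegral.continuous_parametric_intervalIntegral_of_continuous'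
      (f := fun (q : (ℝ × ℝ) × ℝ) θ =>
        fy (q.2, α q.1.1 q.2 + θ * (α q.1.2 q.2 - α q.1.1 q.2))) ?_ 0 1
    have h1 : Continuous fun q : ((ℝ × ℝ) × ℝ) × ℝ => α q.1.1.1 q.1.2 :=
      hαc'.comp (f := fun q : ((ℝ × ℝ) × ℝ) × ℝ => (q.1.1.1, q.1.2)) (by fun_prop)
    have h2 : Continuous fun q : ((ℝ × ℝ) × ℝ) × ℝ => α q.1.1.2 q.1.2 :=
      hαc'.comp (f := fun q : ((ℝ × ℝ) × ℝ) × ℝ => (q.1.1.2, q.1.2)) (by fun_prop)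
    exact hfyc.comp (by fun_prop)
  set H : ℝ × ℝ → ℝ → ℝ := fun p t => ∫ s in t₀..t, G p s with hH
  have hHc : Continuous fun p : (ℝ × ℝ) × ℝ => H p.1 p.2 :=
    intervalIntegral.continuous_parametric_primitive_of_continuous (f := G) hGc
  have hmean : ∀ c c' s, f (s, α c' s) - f (s, α c s) = G (c, c') s * (α c' s - α c s) := by
    intro c c' s
    have hd : ∀ θ ∈ uIcc (0 : ℝ) 1, HasDerivAt
        (fun θ : ℝ => f (s, α c s + θ * (α c' s - α c s)))
        (fy (s, α c s + θ * (α c' s - α c s)) * (α c' s - α c s)) θ := by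
      intro θ _
      have h1 : HasDerivAt (fun θ : ℝ => (s, α c s + θ * (α c' s - α c s)))
          (0, 1 * (α c' s - α c s)) θ :=
        (hasDerivAt_const θ s).prodMk (((hasDerivAt_id θ).mul_const _).const_add _)
      have h2 := ((hf.differentiable one_ne_zero) _).hasFDerivAt.comp_hasDerivAt θ h1
      refine h2.congr_deriv ?_
      rw [show ((0 : ℝ), 1 * (α c' s - α c s)) = (α c' s - α c s) • ((0 : ℝ), (1 : ℝ)) by simp,
        map_smul, smul_eq_mul, mul_comm]
    have := intervalIntegral.integral_eq_sub_of_hasDerivAt hd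
      (Continuous.intervalIntegrable
        ((hfyc.comp (by fun_prop)).mul continuous_const) _ _)
    rw [intervalIntegral.integral_mul_const] at this
    simpa using this.symm
  have hdiff : ∀ c ∈ ball y₀ 1, ∀ c' ∈ ball y₀ 1, ∀ t ∈ Ioo (t₀ - 1) (t₀ + 1),
      α c' t - α c t = (c' - c) * Real.exp (H (c, c') t) := by
    intro c hc c' hc' t ht
    have ht₀ : t₀ ∈ Ioo (t₀ - 1) (t₀ + 1) := by constructor <;> linarith
    -- the integrating factor `exp (-H)` turns the linear equation for the difference of the two
    -- solutions into a conservation law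
    have hder : ∀ s ∈ Ioo (t₀ - 1) (t₀ + 1),
        HasDerivAt (fun s => (α c' s - α c s) * Real.exp (-H (c, c') s)) 0 s := by
      intro s hs
      have hHd : HasDerivAt (H (c, c')) (G (c, c') s) s :=
        (hGc.comp (by fun_prop : Continuous fun s : ℝ => ((c, c'), s))).integral_hasStrictDerivAt
          t₀ s |>.hasDerivAt
      refine ((((hα c' hc').2 s hs).sub ((hα c hc).2 s hs)).mul hHd.neg.exp).congr_deriv ?_
      simp only [hmean, Pi.sub_apply, Pi.neg_apply]
      ring
    have hconst := isOpen_Ioo.is_const_of_deriv_eq_zero isPreconnected_Ioo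
      (fun s hs => (hder s hs).differentiableAt.differentiableWithinAt)
      (fun s hs => (hder s hs).deriv) ht ht₀
    simp only [(hα c hc).1, (hα c' hc').1, hH, intervalIntegral.integral_same, neg_zero,
      Real.exp_zero, mul_one] at hconst
    rw [← hconst, mul_assoc, ← Real.exp_add, neg_add_cancel, Real.exp_zero, mul_one]
  refine ⟨fun c t => Real.exp (H (c, c) t), ?_, fun c t => (Real.exp_pos _).ne', ?_⟩
  · exact Real.continuous_exp.comp
      (hHc.comp (by fun_prop : Continuous fun p : ℝ × ℝ => ((p.1, p.1), p.2)))
  · intro c hc t ht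
    rw [hasDerivAt_iff_tendsto_slope]
    have hcont : Continuous fun c' => Real.exp (H (c, c') t) := Real.continuous_exp.comp
      (hHc.comp (by fun_prop : Continuous fun c' : ℝ => ((c, c'), t)))
    refine ((hcont.tendsto c).mono_left nhdsWithin_le_nhds).congr' ?_
    filter_upwards [self_mem_nhdsWithin, nhdsWithin_le_nhds (isOpen_ball.mem_nhds hc)]
      with c' hne hc'
    rw [slope_def_field, hdiff c hc c' hc' t ht, mul_div_cancel_left₀]
    exact sub_ne_zero.2 hne

/-- The linear isomorphism `(u, v) ↦ (v, e u + m v)` of the plane, for `e ≠ 0`: the derivative of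
`(c, t) ↦ (t, α c t)` when `∂α/∂c = e` and `∂α/∂t = m`. -/
noncomputable def shearEquiv (e m : ℝ) (he : e ≠ 0) : (ℝ × ℝ) ≃L[ℝ] ℝ × ℝ :=
  ContinuousLinearEquiv.equivOfInverse
    ((ContinuousLinearMap.snd ℝ ℝ ℝ).prod
      (e • ContinuousLinearMap.fst ℝ ℝ ℝ + m • ContinuousLinearMap.snd ℝ ℝ ℝ))
    ((e⁻¹ • (ContinuousLinearMap.snd ℝ ℝ ℝ - m • ContinuousLinearMap.fst ℝ ℝ ℝ)).prod
      (ContinuousLinearMap.fst ℝ ℝ ℝ))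
    (fun p => by ext <;> simp [he])
    (fun p => by ext <;> simp [he])

/-- Near any point, `y' = f (x, y)` has a first integral `S` without critical points: `∂S/∂x + f ∂S/∂y = 0` and
`∂S/∂y ≠ 0`. -/
theorem exists_first_integral {f : ℝ × ℝ → ℝ} (hf : ContDiff ℝ 1 f) (hc : HasCompactSupport f)
    (z₀ : ℝ × ℝ) :
    ∃ U : Set (ℝ × ℝ), IsOpen U ∧ z₀ ∈ U ∧ ∃ S : ℝ × ℝ → ℝ, ∀ z ∈ U, DifferentiableAt ℝ S z ∧
      fderiv ℝ S z (0, 1) ≠ 0 ∧ fderiv ℝ S z (1, 0) = -f z * fderiv ℝ S z (0, 1) := by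
  obtain ⟨t₀, y₀⟩ := z₀
  obtain ⟨α, hαc, hα⟩ := exists_continuous_flow hf hc t₀ y₀
  obtain ⟨E, hEc, hE0, hE⟩ := exists_deriv_initial_value hf hαc hα
  have hΩ : IsOpen (ball y₀ 1 ×ˢ Ioo (t₀ - 1) (t₀ + 1)) := isOpen_ball.prod isOpen_Ioo
  have hu₀ : (y₀, t₀) ∈ ball y₀ 1 ×ˢ Ioo (t₀ - 1) (t₀ + 1) :=
    ⟨mem_ball_self one_pos, by constructor <;> linarith⟩
  set Φ : ℝ × ℝ → ℝ × ℝ := fun u => (u.2, α u.1 u.2) with hΦdef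
  have hΦ : ∀ u ∈ ball y₀ 1 ×ˢ Ioo (t₀ - 1) (t₀ + 1), HasStrictFDerivAt Φ
      (shearEquiv (E u.1 u.2) (f (Φ u)) (hE0 _ _) : ℝ × ℝ →L[ℝ] ℝ × ℝ) u := by
    intro u hu
    have hα' := hasStrictFDerivAt_uncurry_coprod (𝕜 := ℝ) (u := u) (f := α)
      (f₁ := fun c t => ContinuousLinearMap.toSpanSingleton ℝ (E c t))
      (f₂ := fun c t => ContinuousLinearMap.toSpanSingleton ℝ (f (t, α c t)))
      (by filter_upwards [hΩ.mem_nhds hu] with v hv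
          exact (hE v.1 hv.1 v.2 hv.2).hasFDerivAt)
      (by filter_upwards [hΩ.mem_nhds hu] with v hv
          exact ((hα v.1 hv.1).2 v.2 hv.2).hasFDerivAt)
      ((ContinuousLinearMap.toSpanSingletonCLE (𝕜 := ℝ) (E := ℝ)).continuous.comp
        hEc).continuousAt
      ((ContinuousLinearMap.toSpanSingletonCLE (𝕜 := ℝ) (E := ℝ)).continuous.comp
        (hf.continuous.comp (continuous_snd.prodMk hαc))).continuousAt
    refine (hasStrictFDerivAt_snd.prodMk hα').congr_fderiv ?_
    ext <;> simp [shearEquiv, Function.HasUncurry.uncurry, hΦdef]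
  set e := (hΦ _ hu₀).toOpenPartialHomeomorph Φ with he
  have hecoe : ∀ u, e u = Φ u := fun _ => rfl
  have hz₀ : Φ (y₀, t₀) = (t₀, y₀) := by simp [hΦdef, (hα y₀ hu₀.1).1]
  have hsrc : (y₀, t₀) ∈ e.source := (hΦ _ hu₀).mem_toOpenPartialHomeomorph_source
  refine ⟨e.target ∩ e.symm ⁻¹' (ball y₀ 1 ×ˢ Ioo (t₀ - 1) (t₀ + 1)),
    e.isOpen_inter_preimage_symm hΩ, ⟨?_, ?_⟩, fun z => (e.symm z).1, fun z hz => ?_⟩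
  · rw [← hz₀]; exact e.map_source hsrc
  · rw [← hz₀, ← hecoe, mem_preimage, e.left_inv hsrc]; exact hu₀
  · have hd := (e.hasFDerivAt_symm hz.1 (hΦ _ hz.2).hasFDerivAt).fst
    have hez : Φ (e.symm z) = z := e.right_inv hz.1
    rw [hez] at hd
    refine ⟨hd.differentiableAt, ?_, ?_⟩
    · rw [hd.fderiv]
      simpa [shearEquiv] using hE0 _ _
    · rw [hd.fderiv]
      simp [shearEquiv, mul_comm]

/-- The case in which the coefficient of `dy` does not vanish at the point. -/
theorem local_integrating_divisor_of_ne_zero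
    {a b : ℝ × ℝ → ℝ} (ha : ContDiff ℝ 1 a) (hb : ContDiff ℝ 1 b)
    {z₀ : ℝ × ℝ} (hz₀ : b z₀ ≠ 0) :
    ∃ U : Set (ℝ × ℝ), IsOpen U ∧ z₀ ∈ U ∧
      ∃ S T : ℝ × ℝ → ℝ,
        (∀ z ∈ U, DifferentiableAt ℝ S z) ∧
        (∀ z ∈ U, T z ≠ 0) ∧
        (∀ z ∈ U, a z = T z * fderiv ℝ S z (1, 0) ∧
                  b z = T z * fderiv ℝ S z (0, 1)) := by
  have hbo : IsOpen {z | b z ≠ 0} := isOpen_ne_fun hb.continuous continuous_const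
  obtain ⟨r, hr, hrb⟩ := Metric.nhds_basis_closedBall.mem_iff.1 (hbo.mem_nhds hz₀)
  -- `χ` is supported where `b ≠ 0`, and `χ = 1` near `z₀`
  let χ : ContDiffBump z₀ := ⟨r / 2, r, half_pos hr, half_lt_self hr⟩
  set f : ℝ × ℝ → ℝ := fun z => χ z * (-a z / b z) with hfdef
  have hf : ContDiff ℝ 1 f := by
    rw [contDiff_iff_contDiffAt]
    intro z
    by_cases hz : b z = 0
    · have hz' : z ∉ tsupport χ := fun h => hrb (χ.tsupport_eq ▸ h) hz
      refine (contDiffAt_const (c := (0 : ℝ))).congr_of_eventuallyEq ?_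
      filter_upwards [notMem_tsupport_iff_eventuallyEq.1 hz'] with w hw
      simp [hfdef, hw]
    · exact χ.contDiff.contDiffAt.mul (ha.contDiffAt.neg.div hb.contDiffAt hz)
  obtain ⟨U, hU, hzU, S, hS⟩ := exists_first_integral hf χ.hasCompactSupport.mul_right z₀
  have hbz : ∀ z ∈ ball z₀ (r / 2), b z ≠ 0 := fun z hz =>
    hrb (ball_subset_closedBall (ball_subset_ball (half_le_self hr.le) hz))
  refine ⟨U ∩ ball z₀ (r / 2), hU.inter isOpen_ball, ⟨hzU, mem_ball_self (half_pos hr)⟩,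
    S, fun z => b z / fderiv ℝ S z (0, 1), fun z hz => (hS z hz.1).1,
    fun z hz => div_ne_zero (hbz z hz.2) (hS z hz.1).2.1, fun z hz => ?_⟩
  obtain ⟨-, hy, hx⟩ := hS z hz.1
  have hb0 := hbz z hz.2
  have hχ : χ z = 1 := χ.one_of_mem_closedBall (ball_subset_closedBall hz.2)
  refine ⟨?_, (div_mul_cancel₀ _ hy).symm⟩
  rw [hx]
  simp only [hfdef, hχ]
  field_simp

/-- Born's claim (made precise, local, away from zeros of the form): every `C¹`
differential form `a dx + b dy` on the plane possesses, near a point where it does not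
vanish, an integrating divisor: `d̸Q = T dS` with `T ≠ 0`. -/
theorem local_integrating_divisor_two_dim
    (a b : ℝ × ℝ → ℝ) (ha : ContDiff ℝ 1 a) (hb : ContDiff ℝ 1 b)
    (z₀ : ℝ × ℝ) (hz₀ : (a z₀, b z₀) ≠ (0, 0)) :
    ∃ U : Set (ℝ × ℝ), IsOpen U ∧ z₀ ∈ U ∧
      ∃ S T : ℝ × ℝ → ℝ,
        (∀ z ∈ U, DifferentiableAt ℝ S z) ∧
        (∀ z ∈ U, T z ≠ 0) ∧
        (∀ z ∈ U, a z = T z * fderiv ℝ S z (1, 0) ∧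
                  b z = T z * fderiv ℝ S z (0, 1)) := by
  by_cases hb0 : b z₀ = 0
  · have ha0 : a z₀ ≠ 0 := fun h => hz₀ (by rw [h, hb0])
    -- exchange the two coordinates, so that the coefficient of `dy` is the nonzero one
    let σ : (ℝ × ℝ) ≃L[ℝ] ℝ × ℝ := ContinuousLinearEquiv.prodComm ℝ ℝ ℝ
    have hσσ : ∀ z, σ (σ z) = z := fun z => rfl
    obtain ⟨U, hU, hzU, S, T, hS, hT, h⟩ := local_integrating_divisor_of_ne_zero
      (a := b ∘ σ) (b := a ∘ σ) (hb.comp σ.contDiff) (ha.comp σ.contDiff) (z₀ := σ z₀)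
      (by simpa only [Function.comp_apply, hσσ] using ha0)
    have hd : ∀ z ∈ σ ⁻¹' U, HasFDerivAt (S ∘ σ)
        ((fderiv ℝ S (σ z)).comp σ.toContinuousLinearMap) z :=
      fun z hz => (hS _ hz).hasFDerivAt.comp z σ.hasFDerivAt
    refine ⟨σ ⁻¹' U, hU.preimage σ.continuous, hzU, S ∘ σ, T ∘ σ,
      fun z hz => (hd z hz).differentiableAt, fun z hz => hT _ hz, fun z hz => ?_⟩
    rw [(hd z hz).fderiv]
    exact ⟨(h _ hz).2, (h _ hz).1⟩
  · exact local_integrating_divisor_of_ne_zero ha hb hb0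
end
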